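/- Bound states of the Whittaker (radial Coulomb) operator: let n ∈ ℕ₀, let m ∈ ℂ with Re(m) > −1 and m ≠ −(n + 1/2), let k ∈ ℂ with Re(k) > 0, and set β := 2k(n + m + 1/2). Then the function u(r) := 𝓘_{n+m+1/2, m}(2kr) on ]0,∞[ satisfies: (i) −u''(r) + (m² − 1/4)·r^{−2}·u(r) − (β/r)·u(r) = −k²·u(r) for all r > 0; (ii) ∫_0^∞ |u(r)|² dr < ∞. Hence −β²/(4(n+m+1/2)²) = −k² belongs to the point spectrum of the Whittaker operator H_{β,m} = −∂_r² + (m² − 1/4)/r² − β/r. -/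

import Mathlib

open Complex Set MeasureTheory

/-- Olver-normalized confluent hypergeometric function
`₁𝐅₁(a; c; w) = ∑ (a)ₙ wⁿ/(n! Γ(c+n))`. -/
noncomputable def oneF1reg (a c w : ℂ) : ℂ :=
  ∑' n : ℕ, (ascPochhammer ℂ n).eval a * w ^ n / ((n.factorial : ℂ) * Complex.Gamma (c + n))

/-- 1d Whittaker function `𝓘_{β,m}(z) = z^{1/2+m} e^{-z/2} ₁𝐅₁(1/2+m-β; 1+2m; z)`
(principal branch powers). -/
noncomputable def whittI (β m z : ℂ) : ℂ :=
  z ^ ((1 : ℂ) / 2 + m) * Complex.exp (-z / 2) * oneF1reg (1 / 2 + m - β) (1 + 2 * m) z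

noncomputable def wCo (a c : ℂ) (j : ℕ) : ℂ :=
  (ascPochhammer ℂ j).eval a / ((j.factorial : ℂ) * Complex.Gamma (c + j))

lemma wCo_rec (a c : ℂ) (j : ℕ) :
    ((j : ℂ) + 1) * (c + j) * wCo a c (j + 1) = (a + j) * wCo a c j := by
  have h := Complex.one_div_Gamma_eq_self_mul_one_div_Gamma_add_one (c + j)
  have hj : ((j : ℂ) + 1) ≠ 0 := by exact_mod_cast Nat.succ_ne_zero j
  have hf : (j.factorial : ℂ) ≠ 0 := by exact_mod_cast Nat.factorial_ne_zero j
  unfold wCo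
  rw [ascPochhammer_succ_eval, Nat.factorial_succ]
  push_cast
  rw [← add_assoc c]
  simp only [div_eq_mul_inv, mul_inv] at h ⊢
  rw [h]
  field_simp

lemma wCo_zero (n : ℕ) (c : ℂ) (j : ℕ) (h : n < j) : wCo (-(n : ℂ)) c j = 0 := by
  unfold wCo
  rw [ascPochhammer_eval_neg_coe_nat_of_lt h, zero_div]

noncomputable def wP (n : ℕ) (c : ℂ) : Polynomial ℂ :=
  ∑ j ∈ Finset.range (n + 1), Polynomial.monomial j (wCo (-(n : ℂ)) c j)

lemma wP_coeff (n : ℕ) (c : ℂ) (j : ℕ) : (wP n c).coeff j = wCo (-(n : ℂ)) c j := by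
  unfold wP
  simp only [Polynomial.finsetSum_coeff, Polynomial.coeff_monomial]
  rw [Finset.sum_ite_eq' (Finset.range (n + 1)) j]
  split_ifs with h
  · rfl
  · rw [wCo_zero]
    simpa [Nat.lt_succ_iff] using h

lemma wP_eval (n : ℕ) (c w : ℂ) : oneF1reg (-(n : ℂ)) c w = (wP n c).eval w := by
  unfold oneF1reg
  rw [tsum_eq_sum (s := Finset.range (n + 1))]
  · unfold wP
    rw [Polynomial.eval_finsetSum]
    refine Finset.sum_congr rfl fun j _ => ?_
    rw [Polynomial.eval_monomial, wCo]
    ring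
  · intro j hj
    rw [ascPochhammer_eval_neg_coe_nat_of_lt, zero_mul, zero_div]
    simpa [Nat.lt_succ_iff] using hj

lemma wP_ode (n : ℕ) (c : ℂ) :
    Polynomial.X * (wP n c).derivative.derivative + Polynomial.C c * (wP n c).derivative
      - Polynomial.X * (wP n c).derivative + Polynomial.C (n : ℂ) * wP n c = 0 := by
  ext j
  have h := wCo_rec (-(n : ℂ)) c j
  rcases j with _ | j
  · simp only [Polynomial.coeff_add, Polynomial.coeff_sub, Polynomial.coeff_C_mul,
      Polynomial.coeff_X_mul_zero, Polynomial.coeff_derivative, wP_coeff, Polynomial.coeff_zero]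
    push_cast at h ⊢
    linear_combination h
  · simp only [Polynomial.coeff_add, Polynomial.coeff_sub, Polynomial.coeff_C_mul,
      Polynomial.coeff_X_mul, Polynomial.coeff_derivative, wP_coeff, Polynomial.coeff_zero]
    push_cast at h ⊢
    linear_combination h

lemma w_slit {k : ℂ} (hk : 0 < k.re) {r : ℝ} (hr : 0 < r) : 2 * k * r ∈ slitPlane := by
  left
  have : (2 * k * r).re = 2 * k.re * r := by simp
  rw [this]
  positivity

lemma w_deriv (s : ℂ) {k : ℂ} (hk : 0 < k.re) (g : ℝ → ℂ) (g' : ℂ) {r : ℝ} (hr : 0 < r)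
    (hg : HasDerivAt g g' r) :
    HasDerivAt (fun r : ℝ => (2 * k * r) ^ s * Complex.exp (-(2 * k * r) / 2) * g r)
      ((2 * k * r) ^ s * Complex.exp (-(2 * k * r) / 2) * (s / r * g r - k * g r + g')) r := by
  have hs := w_slit hk hr
  have hr' : (r : ℂ) ≠ 0 := by exact_mod_cast hr.ne'
  have hk' : k ≠ 0 := by rintro rfl; simp at hk
  have h0 : HasDerivAt (fun r : ℝ => 2 * k * (r : ℂ)) (2 * k) r := by
    simpa using (Complex.ofRealCLM.hasDerivAt (x := r)).const_mul (2 * k)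
  have h1 : HasDerivAt (fun r : ℝ => (2 * k * (r : ℂ)) ^ s)
      (s * (2 * k * (r : ℂ)) ^ (s - 1) * (2 * k)) r := by
    have := (((hasDerivAt_id (2 * k * (r : ℂ))).cpow_const (c := s) hs)).scomp r h0
    simp only [id, smul_eq_mul, mul_one] at this
    exact this.congr_deriv (by ring)
  have h2 : HasDerivAt (fun r : ℝ => Complex.exp (-(2 * k * r) / 2))
      (Complex.exp (-(2 * k * r) / 2) * (-(2 * k) / 2)) r :=
    (h0.neg.div_const 2).cexp
  refine ((h1.mul h2).mul hg).congr_deriv ?_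
  rw [Complex.cpow_sub _ _ (slitPlane_ne_zero hs), Complex.cpow_one]
  simp only [Pi.mul_apply]
  field_simp
  ring

lemma w_poly_int {σ b : ℝ} (hσ : -1 < σ) (hb : 0 < b) (R : Polynomial ℂ) :
    IntegrableOn (fun r : ℝ => ((r ^ σ * Real.exp (-b * r) : ℝ) : ℂ) * R.eval (r : ℂ))
      (Ioi (0 : ℝ)) := by
  induction R using Polynomial.induction_on' with
  | add p q hp hq =>
    simp only [Polynomial.eval_add, mul_add]
    exact hp.add hq
  | monomial j a =>
    have h := integrableOn_rpow_mul_exp_neg_mul_rpow (s := σ + j) (p := 1) (b := b)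
      (by have : (0 : ℝ) ≤ j := Nat.cast_nonneg j
          linarith) one_pos hb
    have h2 : IntegrableOn (fun r : ℝ => ((r ^ (σ + j) * Real.exp (-b * r ^ (1 : ℝ)) : ℝ) : ℂ) * a)
      (Ioi (0 : ℝ)) := (Integrable.ofReal h).mul_const a
    refine h2.congr_fun ?_ measurableSet_Ioi
    intro r hr
    have hr : 0 < r := hr
    simp only [Polynomial.eval_monomial, Real.rpow_one]
    rw [Real.rpow_add hr, Real.rpow_natCast]
    push_cast
    ring

/-- bound states of the Whittaker (radial Coulomb) operator: for `n ∈ ℕ₀`,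
`Re m > -1`, `m ≠ -(n+1/2)`, `Re k > 0` and `β = 2k(n+m+1/2)`, the function
`u(r) = 𝓘_{n+m+1/2, m}(2kr)` solves `-u'' + (m²-1/4)r⁻²u - (β/r)u = -k²u` on `]0,∞[`
and is square integrable there; hence `-k²` is in the point spectrum of `H_{β,m}`. -/
theorem whittaker_bound_state (n : ℕ) (m : ℂ) (hm : -1 < m.re)
    (hm' : m ≠ -((n : ℂ) + 1 / 2)) (k : ℂ) (hk : 0 < k.re)
    (β : ℂ) (hβ : β = 2 * k * ((n : ℂ) + m + 1 / 2))
    (u : ℝ → ℂ) (hu : ∀ r : ℝ, u r = whittI ((n : ℂ) + m + 1 / 2) m (2 * k * r)) :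
    (∀ r : ℝ, 0 < r →
      -deriv (deriv u) r + (m ^ 2 - 1 / 4) / (r : ℂ) ^ 2 * u r -
          β / (r : ℂ) * u r = -k ^ 2 * u r) ∧
    IntegrableOn (fun r : ℝ => ‖u r‖ ^ 2) (Ioi (0 : ℝ)) := by
  have hk' : k ≠ 0 := by rintro rfl; simp at hk
  set P := wP n (1 + 2 * m) with hP
  have hu' : u = fun r : ℝ => (2 * k * r) ^ ((1 : ℂ) / 2 + m) *
      Complex.exp (-(2 * k * r) / 2) * P.eval (2 * k * r) := by
    funext r
    rw [hu, whittI, ← wP_eval]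
    congr 2
    ring
  constructor
  · intro r hr
    have hpoly : ∀ (Q : Polynomial ℂ) (x : ℝ), HasDerivAt (fun r : ℝ => Q.eval (2 * k * (r : ℂ)))
        (2 * k * Q.derivative.eval (2 * k * (x : ℂ))) x := by
      intro Q x
      have h0 : HasDerivAt (fun r : ℝ => 2 * k * (r : ℂ)) (2 * k) x := by
        simpa using (Complex.ofRealCLM.hasDerivAt (x := x)).const_mul (2 * k)
      exact (Q.hasDerivAt (2 * k * (x : ℂ))).scomp x h0
    set s : ℂ := 1 / 2 + m with hs
    have hd1 : ∀ x : ℝ, 0 < x → HasDerivAt u _ x := fun x hx => by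
      rw [hu']
      exact w_deriv s hk _ _ hx (hpoly P x)
    have hev : deriv u =ᶠ[nhds r] fun x : ℝ => (2 * k * x) ^ s *
      Complex.exp (-(2 * k * x) / 2) * (s / x * P.eval (2 * k * (x : ℂ))
        - k * P.eval (2 * k * (x : ℂ)) + 2 * k * P.derivative.eval (2 * k * (x : ℂ))) := by
      filter_upwards [lt_mem_nhds hr] with x hx
      exact (hd1 x hx).deriv
    have hr' : (r : ℂ) ≠ 0 := by exact_mod_cast hr.ne'
    have hinv : HasDerivAt (fun x : ℝ => s / (x : ℂ)) (-s / (r : ℂ) ^ 2) r := by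
      have h1 : HasDerivAt (fun x : ℝ => (x : ℂ)) 1 r := Complex.ofRealCLM.hasDerivAt (x := r)
      refine ((hasDerivAt_const r s).div h1 hr').congr_deriv ?_
      simp
    have hd2 := w_deriv s hk _ _ hr
      (((hinv.mul (hpoly P r)).sub ((hpoly P r).const_mul k)).add
        ((hpoly P.derivative r).const_mul (2 * k)))
    have hd3 := (hd2.congr_of_eventuallyEq hev).deriv
    have hode := congrArg (Polynomial.eval (2 * k * (r : ℂ))) (wP_ode n (1 + 2 * m))
    rw [← hP] at hode
    simp only [Polynomial.eval_add, Polynomial.eval_sub, Polynomial.eval_mul, Polynomial.eval_X,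
      Polynomial.eval_C, Polynomial.eval_zero] at hode
    rw [hd3, hβ, hu']
    simp only [Pi.add_apply, Pi.sub_apply, Pi.mul_apply]
    generalize (2 * k * (r : ℂ)) ^ s * Complex.exp (-(2 * k * r) / 2) = E
    generalize Polynomial.eval (2 * k * (r : ℂ)) P.derivative.derivative = p2 at *
    generalize Polynomial.eval (2 * k * (r : ℂ)) P.derivative = p1 at *
    generalize Polynomial.eval (2 * k * (r : ℂ)) P = p0 at *
    have hs2 : m = s - 1 / 2 := by rw [hs]; ring
    clear_value s
    subst hs2
    field_simp
    linear_combination (-32 * k * r * E) * hode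
  · have hint := (w_poly_int (σ := 1 + 2 * m.re) (b := 2 * k.re) (by linarith) (by linarith)
      ((P.comp (Polynomial.C (2 * k) * Polynomial.X)) ^ 2)).norm.const_mul
        ((‖2 * k‖ ^ ((1 : ℂ) / 2 + m).re / Real.exp (arg (2 * k) * ((1 : ℂ) / 2 + m).im)) ^ 2)
    refine IntegrableOn.congr_fun hint ?_ measurableSet_Ioi
    intro r hr
    have hr : 0 < r := hr
    have hz := slitPlane_ne_zero (w_slit hk hr)
    have harg : arg (2 * k * r) = arg (2 * k) := by
      rw [mul_comm, Complex.arg_real_mul _ hr]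
    have hre : (-(2 * k * r) / 2).re = -(k.re * r) := by
      have : -(2 * k * r) / 2 = -(k * r) := by ring
      rw [this]; simp
    have hre2 : ((1 : ℂ) / 2 + m).re = 1 / 2 + m.re := by simp
    rw [hu']
    simp only [Polynomial.eval_pow, Polynomial.eval_comp, Polynomial.eval_mul, Polynomial.eval_C,
      Polynomial.eval_X, norm_mul, norm_pow, Complex.norm_exp, hre,
      Complex.norm_cpow_of_ne_zero hz, harg, Complex.norm_real, hre2]
    have hk0 : 0 ≤ ‖k‖ := norm_nonneg k
    have e1 : Real.exp (-(2 * k.re) * r) = Real.exp (-(k.re * r)) ^ 2 := by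
      rw [← Real.exp_nat_mul]; congr 1; push_cast; ring
    have e2 : r ^ (1 + 2 * m.re) = (r ^ (1 / 2 + m.re)) ^ 2 := by
      rw [← Real.rpow_natCast, ← Real.rpow_mul hr.le]; congr 1; push_cast; ring
    rw [e1, e2, Real.norm_of_nonneg hr.le, Real.mul_rpow (by positivity) hr.le,
      Real.norm_of_nonneg (by positivity), Real.norm_of_nonneg (by positivity)]
    ring
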